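/- Let f : ℤⁿ → ℝ ∪ {+∞} be a DDM-convex function and α a positive integer. Then the scaled function f^α : ℤⁿ → ℝ ∪ {+∞} defined by f^α(x) = f(αx) is DDM-convex. -/

import Mathlib

open Finset

/-- Directed midpoint `μ(x,y)`: round `(xᵢ+yᵢ)/2` towards `xᵢ`, componentwise:
`μ(x,y)ᵢ = ⌈(xᵢ+yᵢ)/2⌉` if `xᵢ ≥ yᵢ`, and `μ(x,y)ᵢ = ⌊(xᵢ+yᵢ)/2⌋` if `xᵢ < yᵢ`. -/
def dmu {n : ℕ} (x y : Fin n → ℤ) : Fin n → ℤ := fun i =>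
  if y i ≤ x i then ⌈((x i + y i : ℤ) : ℚ) / 2⌉ else ⌊((x i + y i : ℤ) : ℚ) / 2⌋

/-- The ℓ∞-norm of an integer vector, as a natural number. -/
def normInf {n : ℕ} (z : Fin n → ℤ) : ℕ := Finset.univ.sup fun i => (z i).natAbs

/-- A function `f : ℤⁿ → ℝ ∪ {+∞}` is DDM-convex if
`f(x) + f(y) ≥ f(μ(x,y)) + f(μ(y,x))` for all `x, y ∈ ℤⁿ`. -/
def DDMConvexFn {n : ℕ} (f : (Fin n → ℤ) → EReal) : Prop :=
  ∀ x y : Fin n → ℤ, f (dmu x y) + f (dmu y x) ≤ f x + f y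

theorem dmu_left {n : ℕ} (x y : Fin n → ℤ) (i : Fin n) :
    dmu x y i = if y i ≤ x i then (x i + y i + 1) / 2 else (x i + y i) / 2 := by
  unfold dmu
  have hfl : ∀ a : ℤ, ⌊(a : ℚ) / 2⌋ = a / 2 := by
    intro a
    rw [Int.floor_eq_iff]
    have h1 : 2 * (a / 2) ≤ a := by omega
    have h2 : a < 2 * (a / 2) + 2 := by omega
    have h1' : (2 : ℚ) * ((a / 2 : ℤ) : ℚ) ≤ a := by exact_mod_cast h1
    have h2' : (a : ℚ) < 2 * ((a / 2 : ℤ) : ℚ) + 2 := by exact_mod_cast h2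
    constructor <;> linarith
  have hce : ∀ a : ℤ, ⌈(a : ℚ) / 2⌉ = (a + 1) / 2 := by
    intro a
    rw [Int.ceil_eq_iff]
    have h1 : 2 * ((a + 1) / 2) ≤ a + 1 := by omega
    have h2 : a ≤ 2 * ((a + 1) / 2) := by omega
    have h1' : (2 : ℚ) * (((a + 1) / 2 : ℤ) : ℚ) ≤ a + 1 := by exact_mod_cast h1
    have h2' : (a : ℚ) ≤ 2 * (((a + 1) / 2 : ℤ) : ℚ) := by exact_mod_cast h2
    constructor <;> linarith
  rw [hfl, hce]

/-- Finiteness propagates inside intervals. -/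
theorem fin_interval (g : Finset ℕ → EReal) (hb : ∀ S, g S ≠ ⊥)
    (H : ∀ S D : Finset ℕ, Disjoint S D → 2 ≤ D.card → ∃ O E : Finset ℕ,
      Disjoint O E ∧ O.Nonempty ∧ E.Nonempty ∧ O ∪ E = D ∧
      g (S ∪ O) + g (S ∪ E) ≤ g S + g (S ∪ D)) :
    ∀ (m : ℕ) (S D : Finset ℕ), D.card ≤ m → Disjoint S D → g S ≠ ⊤ → g (S ∪ D) ≠ ⊤ →
      ∀ A ⊆ D, g (S ∪ A) ≠ ⊤ := by
  intro m
  induction m with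
  | zero =>
    intro S D hD _ h1 _ A hA
    have : D = ∅ := by simpa using hD
    subst this
    have : A = ∅ := by simpa using hA
    subst this
    simpa using h1
  | succ m ih =>
    intro S D hD hdis h1 h2 A hA
    by_cases hc : 2 ≤ D.card
    · obtain ⟨O, E, hOE, hO, hE, rfl, hle⟩ := H S D hdis hc
      have hcard := Finset.card_union_of_disjoint hOE
      have hO' := hO.card_pos
      have hE' := hE.card_pos
      have hlt : g (S ∪ O) + g (S ∪ E) ≠ ⊤ := by
        intro h
        rw [h, top_le_iff] at hle
        exact (EReal.add_ne_top h1 h2) hle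
      have hfO : g (S ∪ O) ≠ ⊤ := by
        intro h; rw [h] at hlt; exact hlt (EReal.top_add_of_ne_bot (hb _))
      have hfE : g (S ∪ E) ≠ ⊤ := by
        intro h; rw [h] at hlt; exact hlt (EReal.add_top_of_ne_bot (hb _))
      rw [Finset.disjoint_union_right] at hdis
      have k1 : g (S ∪ (A ∩ O)) ≠ ⊤ :=
        ih S O (by omega) hdis.1 h1 hfO _ Finset.inter_subset_right
      have k2 : g ((S ∪ E) ∪ (A ∩ O)) ≠ ⊤ := by
        apply ih (S ∪ E) O (by omega) _ hfE _ _ Finset.inter_subset_right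
        · rw [Finset.disjoint_union_left]; exact ⟨hdis.1, hOE.symm⟩
        · rwa [Finset.union_assoc, Finset.union_comm E O]
      have k3 : g ((S ∪ (A ∩ O)) ∪ (A ∩ E)) ≠ ⊤ := by
        apply ih (S ∪ (A ∩ O)) E (by omega) _ k1 _ _ Finset.inter_subset_right
        · rw [Finset.disjoint_union_left]
          exact ⟨hdis.2, hOE.mono_left Finset.inter_subset_right⟩
        · rwa [Finset.union_assoc, Finset.union_comm _ E, ← Finset.union_assoc]
      rwa [Finset.union_assoc, ← Finset.inter_union_distrib_left,
        Finset.inter_eq_left.2 hA] at k3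
    · rcases A.eq_empty_or_nonempty with rfl | hne
      · simpa using h1
      · have := hne.card_pos
        have : A = D := Finset.eq_of_subset_of_card_le hA (by omega)
        rwa [this]

theorem supermod (g : Finset ℕ → EReal) (hb : ∀ S, g S ≠ ⊥)
    (H : ∀ S D : Finset ℕ, Disjoint S D → 2 ≤ D.card → ∃ O E : Finset ℕ,
      Disjoint O E ∧ O.Nonempty ∧ E.Nonempty ∧ O ∪ E = D ∧
      g (S ∪ O) + g (S ∪ E) ≤ g S + g (S ∪ D)) :
    ∀ (m : ℕ) (S A B : Finset ℕ), A.card + B.card ≤ m → Disjoint S A → Disjoint S B →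
      Disjoint A B → g (S ∪ A) + g (S ∪ B) ≤ g S + g (S ∪ (A ∪ B)) := by
  intro m
  induction m with
  | zero =>
    intro S A B h _ _ _
    have hA : A = ∅ := by rw [← Finset.card_eq_zero]; omega
    have hB : B = ∅ := by rw [← Finset.card_eq_zero]; omega
    subst hA hB
    simp
  | succ m ih =>
    -- the main step, `A` with at least two elements and `B` nonempty
    have key : ∀ S A B : Finset ℕ, A.card + B.card ≤ m + 1 → Disjoint S A → Disjoint S B →
        Disjoint A B → 2 ≤ A.card → 1 ≤ B.card →
        g (S ∪ A) + g (S ∪ B) ≤ g S + g (S ∪ (A ∪ B)) := by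
      intro S A B hm hSA hSB hAB hA hB
      by_cases h1 : g S = ⊤
      · rw [h1, EReal.top_add_of_ne_bot (hb _)]; exact le_top
      by_cases h2 : g (S ∪ (A ∪ B)) = ⊤
      · rw [h2, EReal.add_top_of_ne_bot (hb _)]; exact le_top
      have hfin := fin_interval g hb H _ S (A ∪ B) le_rfl
        (Finset.disjoint_union_right.2 ⟨hSA, hSB⟩) h1 h2
      obtain ⟨a, ha⟩ : A.Nonempty := Finset.card_pos.1 (by omega)
      obtain ⟨A', haA', rfl⟩ : ∃ A', a ∉ A' ∧ insert a A' = A :=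
        ⟨A.erase a, by simp, Finset.insert_erase ha⟩
      rw [Finset.card_insert_of_notMem haA'] at hm hA
      rw [Finset.disjoint_insert_right] at hSA
      rw [Finset.disjoint_insert_left] at hAB
      have i1 := ih S A' B (by omega) hSA.2 hSB hAB.2
      have i2 := ih (S ∪ A') {a} B (by simp; omega) (by simp [hSA.1, haA'])
        (Finset.disjoint_union_left.2 ⟨hSB, hAB.2⟩) (by simp [hAB.1])
      have e1 : S ∪ A' ∪ {a} = S ∪ insert a A' := by ext; simp
      have e2 : S ∪ A' ∪ B = S ∪ (A' ∪ B) := by ext; simp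
      have e3 : S ∪ A' ∪ ({a} ∪ B) = S ∪ (insert a A' ∪ B) := by ext; simp
      rw [e1, e2, e3] at i2
      have f1 := hfin A' (by intro z; simp; tauto)
      have f2 := hfin (insert a A') (by intro z; simp; tauto)
      have f3 := hfin B (by intro z; simp; tauto)
      have f4 := hfin (A' ∪ B) (by intro z; simp; tauto)
      lift g S to ℝ using ⟨h1, hb _⟩ with r0
      lift g (S ∪ (insert a A' ∪ B)) to ℝ using ⟨h2, hb _⟩ with r5
      lift g (S ∪ A') to ℝ using ⟨f1, hb _⟩ with r1
      lift g (S ∪ insert a A') to ℝ using ⟨f2, hb _⟩ with r2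
      lift g (S ∪ B) to ℝ using ⟨f3, hb _⟩ with r3
      lift g (S ∪ (A' ∪ B)) to ℝ using ⟨f4, hb _⟩ with r4
      norm_cast at i1 i2 ⊢
      linarith
    intro S A B hm hSA hSB hAB
    rcases A.eq_empty_or_nonempty with rfl | hA
    · simp
    rcases B.eq_empty_or_nonempty with rfl | hB
    · simp [add_comm]
    have hA' := hA.card_pos
    have hB' := hB.card_pos
    by_cases hA2 : 2 ≤ A.card
    · exact key S A B hm hSA hSB hAB hA2 hB'
    by_cases hB2 : 2 ≤ B.card
    · rw [add_comm (g (S ∪ A)), Finset.union_comm A B]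
      exact key S B A (by omega) hSB hSA hAB.symm hB2 hA'
    obtain ⟨a, rfl⟩ := Finset.card_eq_one.1 (show A.card = 1 by omega)
    obtain ⟨b, rfl⟩ := Finset.card_eq_one.1 (show B.card = 1 by omega)
    have hc := Finset.card_union_of_disjoint hAB
    simp only [Finset.card_singleton] at hc
    obtain ⟨O, E, hOE, hO, hE, hu, hle⟩ := H S ({a} ∪ {b})
      (Finset.disjoint_union_right.2 ⟨hSA, hSB⟩) (by omega)
    have hO' := hO.card_pos
    have hE' := hE.card_pos
    have hc2 := Finset.card_union_of_disjoint hOE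
    rw [hu, hc] at hc2
    obtain ⟨o, rfl⟩ := Finset.card_eq_one.1 (show O.card = 1 by omega)
    obtain ⟨e, rfl⟩ := Finset.card_eq_one.1 (show E.card = 1 by omega)
    have ho : o ∈ ({a} ∪ {b} : Finset ℕ) := by rw [← hu]; simp
    have he : e ∈ ({a} ∪ {b} : Finset ℕ) := by rw [← hu]; simp
    have hne : o ≠ e := by simpa using hOE
    simp only [Finset.mem_union, Finset.mem_singleton] at ho he
    rcases ho with rfl | rfl <;> rcases he with rfl | rfl
    · exact absurd rfl hne
    · exact hle
    · rw [add_comm]; exact hle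
    · exact absurd rfl hne

theorem odd_split (D : Finset ℕ) : ∃ O ⊆ D, ∀ t : ℕ,
    (O.filter (· < t)).card = ((D.filter (· < t)).card + 1) / 2 := by
  induction D using Finset.induction_on_max with
  | empty => exact ⟨∅, by simp, by simp⟩
  | insert M D hM ih =>
    obtain ⟨O, hO, h⟩ := ih
    have hMD : M ∉ D := fun h => lt_irrefl _ (hM M h)
    have hMO : M ∉ O := fun h => hMD (hO h)
    have hall : ∀ t, M < t → D.filter (· < t) = D := fun t ht =>
      Finset.filter_true_of_mem (fun z hz => (hM z hz).trans ht)
    have hallO : ∀ t, M < t → O.filter (· < t) = O := fun t ht =>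
      Finset.filter_true_of_mem (fun z hz => (hM z (hO hz)).trans ht)
    have hcard := h (M + 1)
    rw [hall _ (by omega), hallO _ (by omega)] at hcard
    by_cases hp : D.card % 2 = 0
    · refine ⟨insert M O, Finset.insert_subset_insert _ hO, fun t => ?_⟩
      rw [Finset.filter_insert, Finset.filter_insert]
      split_ifs with ht
      · rw [hall t ht, hallO t ht, Finset.card_insert_of_notMem hMD,
          Finset.card_insert_of_notMem hMO]
        omega
      · exact h t
    · refine ⟨O, hO.trans (Finset.subset_insert _ _), fun t => ?_⟩
      rw [Finset.filter_insert]
      split_ifs with ht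
      · rw [hall t ht, hallO t ht, Finset.card_insert_of_notMem hMD]
        omega
      · exact h t

/-- Points of the cube spanned by the level vectors of `d` based at `x`. -/
def cubePt {n : ℕ} (x d : Fin n → ℤ) (S : Finset ℕ) : Fin n → ℤ := fun i =>
  x i + (d i).sign * ((S.filter (· < (d i).natAbs)).card : ℤ)

theorem cubePt_union {n : ℕ} (x d : Fin n → ℤ) (S D : Finset ℕ) (h : Disjoint S D) (i : Fin n) :
    cubePt x d (S ∪ D) i =
      cubePt x d S i + (d i).sign * ((D.filter (· < (d i).natAbs)).card : ℤ) := by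
  unfold cubePt
  rw [Finset.filter_union, Finset.card_union_of_disjoint
    (Finset.disjoint_filter_filter h)]
  push_cast
  ring

theorem cube_H {n : ℕ} (f : (Fin n → ℤ) → EReal) (hf : DDMConvexFn f) (x d : Fin n → ℤ)
    (S D : Finset ℕ) (hSD : Disjoint S D) (hD : 2 ≤ D.card) : ∃ O E : Finset ℕ,
      Disjoint O E ∧ O.Nonempty ∧ E.Nonempty ∧ O ∪ E = D ∧
      f (cubePt x d (S ∪ O)) + f (cubePt x d (S ∪ E)) ≤
        f (cubePt x d S) + f (cubePt x d (S ∪ D)) := by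
  obtain ⟨O, hO, h⟩ := odd_split D
  have hdis : Disjoint O (D \ O) := Finset.disjoint_sdiff
  have hun : O ∪ (D \ O) = D := Finset.union_sdiff_of_subset hO
  have hE : ∀ t, ((D \ O).filter (· < t)).card = (D.filter (· < t)).card / 2 := by
    intro t
    have h1 := h t
    have h2 : (D.filter (· < t)).card =
        (O.filter (· < t)).card + ((D \ O).filter (· < t)).card := by
      rw [← Finset.card_union_of_disjoint (Finset.disjoint_filter_filter hdis),
        ← Finset.filter_union, hun]
    omega
  have hOc : 0 < O.card := by
    have h1 := h (D.sup id + 1)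
    have h2 : D.filter (· < D.sup id + 1) = D := Finset.filter_true_of_mem
      (fun z hz => Nat.lt_succ_of_le (Finset.le_sup (f := id) hz))
    rw [h2] at h1
    have := Finset.card_filter_le O (· < D.sup id + 1)
    omega
  have hEc : 0 < (D \ O).card := by
    have h1 := hE (D.sup id + 1)
    have h2 : D.filter (· < D.sup id + 1) = D := Finset.filter_true_of_mem
      (fun z hz => Nat.lt_succ_of_le (Finset.le_sup (f := id) hz))
    rw [h2] at h1
    have := Finset.card_filter_le (D \ O) (· < D.sup id + 1)
    omega
  refine ⟨O, D \ O, hdis, Finset.card_pos.1 hOc, Finset.card_pos.1 hEc, hun, ?_⟩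
  have hSO : Disjoint S O := hSD.mono_right hO
  have hSE : Disjoint S (D \ O) := hSD.mono_right Finset.sdiff_subset
  have e1 : cubePt x d (S ∪ O) = dmu (cubePt x d (S ∪ D)) (cubePt x d S) := by
    funext i
    rw [dmu_left, cubePt_union _ _ _ _ hSO, cubePt_union _ _ _ _ hSD, h]
    rcases Int.lt_trichotomy (d i) 0 with hd | hd | hd
    · rw [Int.sign_eq_neg_one_of_neg hd]; split_ifs <;> omega
    · rw [hd]; simp; omega
    · rw [Int.sign_eq_one_of_pos hd]; split_ifs <;> omega
  have e2 : cubePt x d (S ∪ (D \ O)) = dmu (cubePt x d S) (cubePt x d (S ∪ D)) := by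
    funext i
    rw [dmu_left, cubePt_union _ _ _ _ hSE, cubePt_union _ _ _ _ hSD, hE]
    rcases Int.lt_trichotomy (d i) 0 with hd | hd | hd
    · rw [Int.sign_eq_neg_one_of_neg hd]; split_ifs <;> omega
    · rw [hd]; simp; omega
    · rw [Int.sign_eq_one_of_pos hd]; split_ifs <;> omega
  rw [e1, e2, add_comm (f (cubePt x d S))]
  exact hf _ _

theorem count_blocks (a : ℕ) (ha : 0 < a) (e : ℕ) :
    Nat.count (fun k => k / a % 2 = 0) (a * e) = a * ((e + 1) / 2) := by
  induction e with
  | zero => simp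
  | succ e ih =>
    rw [Nat.mul_succ, Nat.count_add, ih]
    by_cases he : e % 2 = 0
    · have : Nat.count (fun k => (a * e + k) / a % 2 = 0) a = a := by
        rw [Nat.count_iff_forall]
        intro k hk
        rw [Nat.mul_add_div ha, Nat.div_eq_of_lt hk]
        simpa using he
      rw [this, show (e + 1 + 1) / 2 = (e + 1) / 2 + 1 by omega]
      ring
    · have : Nat.count (fun k => (a * e + k) / a % 2 = 0) a = 0 := by
        rw [Nat.count_iff_forall_not]
        intro k hk
        rw [Nat.mul_add_div ha, Nat.div_eq_of_lt hk]
        simpa using he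
      rw [this, show (e + 1 + 1) / 2 = (e + 1) / 2 by omega]
      ring

/-- DDM-convexity is closed under scaling: if `f` is DDM-convex and `α` is a
positive integer, then `fᵅ(x) = f(αx)` is DDM-convex. -/
theorem ddmConvex_scaling {n : ℕ} (f : (Fin n → ℤ) → EReal)
    (hbot : ∀ x, f x ≠ ⊥) (hf : DDMConvexFn f) (α : ℤ) (hα : 0 < α) :
    DDMConvexFn (fun x => f (fun i => α * x i)) := by
  intro x y
  obtain ⟨a, rfl⟩ : ∃ a : ℕ, α = a := ⟨α.toNat, by omega⟩
  have ha : 0 < a := by exact_mod_cast hα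
  set X : Fin n → ℤ := fun i => (a : ℤ) * x i with hX
  set d : Fin n → ℤ := fun i => (a : ℤ) * (y i - x i) with hd
  set N : ℕ := Finset.univ.sup (fun i => (d i).natAbs) with hN
  have hNi : ∀ i, (d i).natAbs ≤ N := fun i =>
    Finset.le_sup (f := fun i => (d i).natAbs) (Finset.mem_univ i)
  have habs : ∀ i, (d i).natAbs = a * (y i - x i).natAbs := by
    intro i; simp [hd, Int.natAbs_mul]
  have hsgn : ∀ i, (d i).sign = (y i - x i).sign := by
    intro i; simp only [hd]; rw [Int.sign_mul, Int.sign_eq_one_of_pos hα, one_mul]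
  set J := (Finset.range N).filter (fun k => k / a % 2 = 0) with hJ
  set K := (Finset.range N).filter (fun k => ¬ k / a % 2 = 0) with hK
  have hJK : Disjoint J K := Finset.disjoint_filter_filter_not _ _ _
  have hun : J ∪ K = Finset.range N := Finset.filter_union_filter_not_eq _ _
  have hcR : ∀ i, ((Finset.range N).filter (· < (d i).natAbs)).card =
      a * (y i - x i).natAbs := by
    intro i
    rw [← habs]
    have : (Finset.range N).filter (· < (d i).natAbs) = Finset.range (d i).natAbs := by
      ext k
      have := hNi i
      simp only [Finset.mem_filter, Finset.mem_range]
      omega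
    rw [this, Finset.card_range]
  have hcJ : ∀ i, (J.filter (· < (d i).natAbs)).card =
      a * (((y i - x i).natAbs + 1) / 2) := by
    intro i
    rw [← count_blocks a ha, ← habs, Nat.count_eq_card_filter_range]
    congr 1
    ext k
    have := hNi i
    simp only [hJ, Finset.mem_filter, Finset.mem_range]
    constructor
    · rintro ⟨⟨_, h⟩, h'⟩; exact ⟨h', h⟩
    · rintro ⟨h', h⟩; exact ⟨⟨by omega, h⟩, h'⟩
  have hcK : ∀ i, (K.filter (· < (d i).natAbs)).card =
      a * ((y i - x i).natAbs / 2) := by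
    intro i
    have h1 : ((Finset.range N).filter (· < (d i).natAbs)).card =
        (J.filter (· < (d i).natAbs)).card + (K.filter (· < (d i).natAbs)).card := by
      rw [← Finset.card_union_of_disjoint (Finset.disjoint_filter_filter hJK),
        ← Finset.filter_union, hun]
    rw [hcR, hcJ] at h1
    have h2 : (y i - x i).natAbs = ((y i - x i).natAbs + 1) / 2 + (y i - x i).natAbs / 2 := by
      omega
    have h3 : a * (y i - x i).natAbs =
        a * (((y i - x i).natAbs + 1) / 2) + a * ((y i - x i).natAbs / 2) := by
      rw [← mul_add, ← h2]
    omega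
  have main := supermod (fun S => f (cubePt X d S)) (fun S => hbot _)
    (fun S D h1 h2 => cube_H f hf X d S D h1 h2) _ ∅ J K le_rfl
    (Finset.disjoint_empty_left _) (Finset.disjoint_empty_left _) hJK
  simp only [Finset.empty_union, hun] at main
  have e0 : cubePt X d ∅ = X := by funext i; simp [cubePt]
  have e1 : cubePt X d (Finset.range N) = fun i => (a : ℤ) * y i := by
    funext i
    simp only [cubePt, hcR, hsgn, hX]
    push_cast
    have := Int.sign_mul_abs (y i - x i)
    linear_combination (a : ℤ) * this
  have e2 : cubePt X d J = fun i => (a : ℤ) * dmu y x i := by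
    funext i
    simp only [cubePt, hcJ, hsgn, hX]
    have : dmu y x i = x i + (y i - x i).sign * ((((y i - x i).natAbs + 1) / 2 : ℕ) : ℤ) := by
      rw [dmu_left]
      rcases Int.lt_trichotomy (y i - x i) 0 with hd | hd | hd
      · rw [Int.sign_eq_neg_one_of_neg hd]; split_ifs <;> omega
      · rw [hd]; simp; omega
      · rw [Int.sign_eq_one_of_pos hd]; split_ifs <;> omega
    rw [this, Nat.cast_mul]
    ring
  have e3 : cubePt X d K = fun i => (a : ℤ) * dmu x y i := by
    funext i
    simp only [cubePt, hcK, hsgn, hX]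
    have : dmu x y i = x i + (y i - x i).sign * (((y i - x i).natAbs / 2 : ℕ) : ℤ) := by
      rw [dmu_left]
      rcases Int.lt_trichotomy (y i - x i) 0 with hd | hd | hd
      · rw [Int.sign_eq_neg_one_of_neg hd]; split_ifs <;> omega
      · rw [hd]; simp; omega
      · rw [Int.sign_eq_one_of_pos hd]; split_ifs <;> omega
    rw [this, Nat.cast_mul]
    ring
  rw [e0, e1, e2, e3, add_comm] at main
  exact main
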